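/- Let (M,𝒳) be a small n-exact category and let X : X⁰ → X¹ → ⋯ → Xⁿ → X^{n+1} and Y : X⁰ → Y¹ → ⋯ → Yⁿ → X^{n+1} be two 𝒳-admissible n-exact sequences with the same end terms. Suppose the complexes 0 → H_{X⁰} → H_{X¹} → ⋯ → H_{X^{n+1}} → 0 and 0 → H_{X⁰} → H_{Y¹} → ⋯ → H_{X^{n+1}} → 0 in Mod(M) are Yoneda equivalent in the localization of Mod(M) at the weakly effaceable functors, i.e., they are connected by a finite zigzag of complexes 0 → H_{X⁰} → F¹ → ⋯ → Fⁿ → H_{X^{n+1}} → 0 with Eff-closed middle terms and all homology weakly effaceable, via morphisms of complexes restricting to the identity on H_{X⁰} and on H_{X^{n+1}}. Then X and Y are homotopy equivalent n-exact sequences in M: there is a morphism of complexes X → Y which is the identity on X⁰ and X^{n+1} and is a homotopy equivalence. -/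

import Mathlib

open CategoryTheory CategoryTheory.Limits Opposite

attribute [local instance] CategoryTheory.Limits.hasBinaryBiproducts_of_finite_biproducts

universe u

namespace NExactCat

variable {M : Type u} [SmallCategory M] [Preadditive M] [HasFiniteBiproducts M]

/-- A sequence (`ℕ`-indexed, only the indices `0, …, n+1` of the objects and `0, …, n` of the
maps being relevant) of composable morphisms in an additive category. -/
structure NSeq (M : Type u) [SmallCategory M] where
  X : ℕ → M
  d : ∀ i, X i ⟶ X (i + 1)

/-- `S` is a complex (in degrees `0, …, n+1`). -/
def NSeq.IsComplex (n : ℕ) (S : NSeq M) : Prop :=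
  ∀ i, i + 1 ≤ n → S.d i ≫ S.d (i + 1) = 0

/-- `(d¹,…,dⁿ)` is an `n`-cokernel of `d⁰`: for every `W` the sequence
`0 → Hom(X^{n+1},W) → Hom(Xⁿ,W) → ⋯ → Hom(X⁰,W)` of abelian groups is exact. -/
def RightNExact (n : ℕ) (S : NSeq M) : Prop :=
  (∀ W : M, Function.Injective fun g : S.X (n + 1) ⟶ W => S.d n ≫ g) ∧
  (∀ W : M, ∀ i, i < n → Function.Exact
      (fun g : S.X (i + 2) ⟶ W => S.d (i + 1) ≫ g)
      (fun g : S.X (i + 1) ⟶ W => S.d i ≫ g))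

/-- `(d⁰,…,d^{n-1})` is an `n`-kernel of `dⁿ`: for every `W` the sequence
`0 → Hom(W,X⁰) → Hom(W,X¹) → ⋯ → Hom(W,X^{n+1})` of abelian groups is exact. -/
def LeftNExact (n : ℕ) (S : NSeq M) : Prop :=
  (∀ W : M, Function.Injective fun g : W ⟶ S.X 0 => g ≫ S.d 0) ∧
  (∀ W : M, ∀ i, i < n → Function.Exact
      (fun g : W ⟶ S.X i => g ≫ S.d i)
      (fun g : W ⟶ S.X (i + 1) => g ≫ S.d (i + 1)))

/-- An `n`-exact sequence: a complex which is both a left and a right `n`-exact sequence. -/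
def IsNExactSeq (n : ℕ) (S : NSeq M) : Prop :=
  S.IsComplex n ∧ LeftNExact n S ∧ RightNExact n S

/-- `f` is a morphism of complexes `S ⟶ T` (in degrees `0, …, n+1`). -/
def IsNSeqHom (n : ℕ) (S T : NSeq M) (f : ∀ i, S.X i ⟶ T.X i) : Prop :=
  ∀ i, i ≤ n → S.d i ≫ f (i + 1) = f i ≫ T.d i

/-- There is a weak isomorphism `S ⟶ T`: a morphism of complexes whose components `f k` and
`f (k+1)` are isomorphisms for some `k ∈ {0,…,n+1}`, indices taken modulo `n+2`. -/
def ExistsWeakIso (n : ℕ) (S T : NSeq M) : Prop :=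
  ∃ f : ∀ i, S.X i ⟶ T.X i, IsNSeqHom n S T f ∧
    ((∃ k ≤ n, IsIso (f k) ∧ IsIso (f (k + 1))) ∨ (IsIso (f (n + 1)) ∧ IsIso (f 0)))

/-- The objects of the mapping cone `X⁰ → X¹ ⊞ Y⁰ → ⋯ → Xⁿ ⊞ Y^{n-1} → Yⁿ` of a morphism of
complexes indexed by `0, …, n`. -/
noncomputable def coneX (n : ℕ) (S T : NSeq M) (i : ℕ) : M :=
  if i = 0 then S.X 0 else if i ≤ n then S.X i ⊞ T.X (i - 1) else T.X n

lemma coneX_zero (n : ℕ) (S T : NSeq M) : coneX n S T 0 = S.X 0 := by simp [coneX]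

lemma coneX_mid (n : ℕ) (S T : NSeq M) {i : ℕ} (h0 : i ≠ 0) (h1 : i ≤ n) :
    coneX n S T i = (S.X i ⊞ T.X (i - 1)) := by simp [coneX, h0, h1]

lemma coneX_top (n : ℕ) (S T : NSeq M) {i : ℕ} (h : n < i) :
    coneX n S T i = T.X n := by
  have h0 : i ≠ 0 := by omega
  have h1 : ¬ i ≤ n := by omega
  simp [coneX, h0, h1]

/-- The differentials of the mapping cone, given in matrix form by
`d_C^k = ((-d_X^{k+1}, 0), (f^{k+1}, d_Y^k))`. -/
noncomputable def coneD (n : ℕ) (S T : NSeq M) (f : ∀ i, S.X i ⟶ T.X i) (i : ℕ) :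
    coneX n S T i ⟶ coneX n S T (i + 1) :=
  if h0 : i = 0 then
    (if h1 : 1 ≤ n then
      eqToHom (show coneX n S T i = S.X 0 by subst h0; exact coneX_zero n S T) ≫
        biprod.lift (-(S.d 0)) (f 0) ≫
        eqToHom (show (S.X 1 ⊞ T.X 0) = coneX n S T (i + 1) by
          subst h0; exact (coneX_mid n S T one_ne_zero h1).symm)
    else 0)
  else if h1 : i + 1 ≤ n then
    eqToHom (coneX_mid n S T h0 (by omega)) ≫
      biprod.lift (biprod.fst ≫ (-(S.d i)))
        (biprod.fst ≫ f i + biprod.snd ≫ (T.d (i - 1) ≫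
          eqToHom (congrArg T.X (by omega : i - 1 + 1 = i)))) ≫
      eqToHom ((coneX_mid n S T (Nat.succ_ne_zero i) h1).symm)
  else if h2 : i = n then
    eqToHom (coneX_mid n S T h0 (by omega)) ≫
      biprod.desc (f i) (T.d (i - 1) ≫ eqToHom (congrArg T.X (by omega : i - 1 + 1 = i))) ≫
      eqToHom (show T.X i = coneX n S T (i + 1) by
        rw [h2]; exact (coneX_top n S T (by omega)).symm)
  else 0

/-- The mapping cone, as an `NSeq`. -/
noncomputable def cone (n : ℕ) (S T : NSeq M) (f : ∀ i, S.X i ⟶ T.X i) : NSeq M :=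
  ⟨coneX n S T, coneD n S T f⟩

/-- The diagram determined by `f` is an `n`-pushout: the mapping cone is a right `n`-exact
sequence. -/
def IsNPushout (n : ℕ) (S T : NSeq M) (f : ∀ i, S.X i ⟶ T.X i) : Prop :=
  RightNExact n (cone n S T f)

/-- The diagram determined by `f` is an `n`-pullback: the mapping cone is a left `n`-exact
sequence. -/
def IsNPullback (n : ℕ) (S T : NSeq M) (f : ∀ i, S.X i ⟶ T.X i) : Prop :=
  LeftNExact n (cone n S T f)

/-- The shift of a sequence, `(shift S).X i = S.X (i+1)`. -/
def NSeq.shift (S : NSeq M) : NSeq M :=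
  ⟨fun i => S.X (i + 1), fun i => S.d (i + 1)⟩

/-- `g` is an `𝒳`-admissible monomorphism: it occurs as the first differential of a member
of `𝒳`. -/
def AdmMono (𝒳 : Set (NSeq M)) {A B : M} (g : A ⟶ B) : Prop :=
  ∃ Z ∈ 𝒳, ∃ (h0 : Z.X 0 = A) (h1 : Z.X 1 = B), Z.d 0 = eqToHom h0 ≫ g ≫ eqToHom h1.symm

/-- `g` is an `𝒳`-admissible epimorphism: it occurs as the last differential of a member
of `𝒳`. -/
def AdmEpi (n : ℕ) (𝒳 : Set (NSeq M)) {A B : M} (g : A ⟶ B) : Prop :=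
  ∃ Z ∈ 𝒳, ∃ (h0 : Z.X n = A) (h1 : Z.X (n + 1) = B),
    Z.d n = eqToHom h0 ≫ g ≫ eqToHom h1.symm

/-- `𝒳` is an `n`-exact structure on `M`: a class of `n`-exact sequences, closed under weak
isomorphisms, satisfying the axioms (E0), (E1), (E1ᵒᵖ), (E2) and (E2ᵒᵖ). -/
structure IsNExactStructure (n : ℕ) (𝒳 : Set (NSeq M)) : Prop where
  /-- members of `𝒳` are `n`-exact sequences -/
  nExact : ∀ Z ∈ 𝒳, IsNExactSeq n Z
  /-- `𝒳` is closed under weak isomorphisms -/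
  weakIsoClosed : ∀ Z ∈ 𝒳, ∀ T : NSeq M, IsNExactSeq n T →
      (ExistsWeakIso n Z T ∨ ExistsWeakIso n T Z) → T ∈ 𝒳
  /-- (E0): the zero sequence `0 → 0 → ⋯ → 0` is admissible -/
  zero_mem : ∃ Z ∈ 𝒳, ∀ i ≤ n + 1, IsZero (Z.X i)
  /-- (E1): admissible monomorphisms are closed under composition -/
  monoComp : ∀ {A B C : M} (g₁ : A ⟶ B) (g₂ : B ⟶ C),
      AdmMono 𝒳 g₁ → AdmMono 𝒳 g₂ → AdmMono 𝒳 (g₁ ≫ g₂)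
  /-- (E1ᵒᵖ): admissible epimorphisms are closed under composition -/
  epiComp : ∀ {A B C : M} (g₁ : A ⟶ B) (g₂ : B ⟶ C),
      AdmEpi n 𝒳 g₁ → AdmEpi n 𝒳 g₂ → AdmEpi n 𝒳 (g₁ ≫ g₂)
  /-- (E2): existence of `n`-pushouts along morphisms out of `X⁰`, with `d_Y⁰` an admissible
  monomorphism -/
  pushout : ∀ Z ∈ 𝒳, ∀ (W : M) (f0 : Z.X 0 ⟶ W),
      ∃ (T : NSeq M) (f : ∀ i, Z.X i ⟶ T.X i) (h : T.X 0 = W),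
        f 0 = f0 ≫ eqToHom h.symm ∧
        (∀ i, i + 1 ≤ n → Z.d i ≫ f (i + 1) = f i ≫ T.d i) ∧
        IsNPushout n Z T f ∧ AdmMono 𝒳 (T.d 0)
  /-- (E2ᵒᵖ): existence of `n`-pullbacks along morphisms into `Y^{n+1}`, with `d_X^n` an
  admissible epimorphism -/
  pullback : ∀ Z ∈ 𝒳, ∀ (A : M) (g : A ⟶ Z.X (n + 1)),
      ∃ (T : NSeq M) (f : ∀ i, T.X i ⟶ Z.X (i + 1)) (h : T.X n = A),
        f n = eqToHom h ≫ g ∧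
        (∀ i, i + 1 ≤ n → T.d i ≫ f (i + 1) = f i ≫ Z.d (i + 1)) ∧
        IsNPullback n T Z.shift f ∧ AdmEpi n 𝒳 (T.d (n - 1))

end NExactCat

namespace NExactCat

variable {M : Type u} [SmallCategory M] [Preadditive M] [HasFiniteBiproducts M]

/-- A functor `F ∈ Mod(M)` is weakly effaceable if every element of `F(X)` is killed by
restriction along some admissible epimorphism `V ⟶ X`. -/
def WeaklyEffaceable (n : ℕ) (𝒳 : Set (NSeq M)) (F : Mᵒᵖ ⥤ AddCommGrpCat.{u}) : Prop :=
  ∀ (X : M) (x : F.obj (op X)), ∃ (V : M) (g : V ⟶ X),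
    AdmEpi n 𝒳 g ∧ F.map g.op x = 0

/-- A functor `F ∈ Mod(M)` is `Eff`-closed (lies in `L₁(M)`) if for every admissible `n`-exact
sequence `Z` the sequence `0 → F(Z^{n+1}) → F(Zⁿ) → F(Z^{n-1})` of abelian groups is exact. -/
def EffClosed (n : ℕ) (𝒳 : Set (NSeq M)) (F : Mᵒᵖ ⥤ AddCommGrpCat.{u}) : Prop :=
  ∀ Z ∈ 𝒳, ∀ j : ℕ, j + 1 = n →
    Function.Injective (fun x : F.obj (op (Z.X (n + 1))) => F.map (Z.d n).op x) ∧
    Function.Exact (fun x : F.obj (op (Z.X (j + 2))) => F.map (Z.d (j + 1)).op x)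
      (fun x : F.obj (op (Z.X (j + 1))) => F.map (Z.d j).op x)

/-- A complex `0 → H_A → F¹ → ⋯ → Fⁿ → H_B → 0` in `Mod(M)` whose end terms are the
representable functors of `A` and `B`. -/
structure RepSeq (M : Type u) [SmallCategory M] [Preadditive M] (n : ℕ) (A B : M) where
  F : ℕ → (Mᵒᵖ ⥤ AddCommGrpCat.{u})
  τ : ∀ i, F i ⟶ F (i + 1)
  hF0 : F 0 = preadditiveYoneda.obj A
  hFtop : F (n + 1) = preadditiveYoneda.obj B
  isComplex : ∀ i, i + 1 ≤ n → τ i ≫ τ (i + 1) = 0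

/-- Every homology object of the complex `0 → F 0 → ⋯ → F (n+1) → 0` (homology being
computed objectwise, as in the functor category `Mod(M)`) is weakly effaceable. -/
def RepSeq.HomologyWeaklyEffaceable {n : ℕ} {A B : M} (𝒳 : Set (NSeq M))
    (S : RepSeq M n A B) : Prop :=
  (∀ (X : M) (x : (S.F 0).obj (op X)), (S.τ 0).app (op X) x = 0 →
    ∃ (V : M) (g : V ⟶ X), AdmEpi n 𝒳 g ∧ (S.F 0).map g.op x = 0) ∧
  (∀ i, i + 1 ≤ n → ∀ (X : M) (x : (S.F (i + 1)).obj (op X)),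
    (S.τ (i + 1)).app (op X) x = 0 →
    ∃ (V : M) (g : V ⟶ X), AdmEpi n 𝒳 g ∧
      ∃ y : (S.F i).obj (op V), (S.τ i).app (op V) y = (S.F (i + 1)).map g.op x) ∧
  (∀ (X : M) (x : (S.F (n + 1)).obj (op X)),
    ∃ (V : M) (g : V ⟶ X), AdmEpi n 𝒳 g ∧
      ∃ y : (S.F n).obj (op V), (S.τ n).app (op V) y = (S.F (n + 1)).map g.op x)

/-- `S` is an `n`-fold extension of `H_B` by `H_A` in the localization of `Mod(M)` at the
weakly effaceable functors: its middle terms are additive and `Eff`-closed, and every homology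
object of `S` is weakly effaceable. -/
def RepSeq.Good {n : ℕ} {A B : M} (𝒳 : Set (NSeq M)) (S : RepSeq M n A B) : Prop :=
  (∀ i, 1 ≤ i → i ≤ n → (S.F i).Additive ∧ EffClosed n 𝒳 (S.F i)) ∧
  S.HomologyWeaklyEffaceable 𝒳

/-- A morphism of such complexes restricting to the identity on the two end terms. -/
def RepSeqConnects {n : ℕ} {A B : M} (S T : RepSeq M n A B) : Prop :=
  ∃ φ : ∀ i, S.F i ⟶ T.F i,
    (∀ i, i ≤ n → S.τ i ≫ φ (i + 1) = φ i ≫ T.τ i) ∧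
    φ 0 = eqToHom (S.hF0.trans T.hF0.symm) ∧
    φ (n + 1) = eqToHom (S.hFtop.trans T.hFtop.symm)

/-- One step of the zigzag: both complexes are of the required form and there is a morphism
between them (in either direction) restricting to the identity on the end terms. -/
def RepSeqStep {n : ℕ} {A B : M} (𝒳 : Set (NSeq M)) (S T : RepSeq M n A B) : Prop :=
  S.Good 𝒳 ∧ T.Good 𝒳 ∧ (RepSeqConnects S T ∨ RepSeqConnects T S)

/-- The complex `0 → H_{Z⁰} → H_{Z¹} → ⋯ → H_{Z^{n+1}} → 0` of representable functors
associated with a complex `Z` in `M`. -/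
def repSeqOf (n : ℕ) (Z : NSeq M) {A B : M} (h0 : Z.X 0 = A) (htop : Z.X (n + 1) = B)
    (hcx : Z.IsComplex n) : RepSeq M n A B where
  F i := preadditiveYoneda.obj (Z.X i)
  τ i := preadditiveYoneda.map (Z.d i)
  hF0 := by show preadditiveYoneda.obj (Z.X 0) = _; rw [h0]
  hFtop := by show preadditiveYoneda.obj (Z.X (n + 1)) = _; rw [htop]
  isComplex i hi := by
    rw [← Functor.map_comp, hcx i hi]
    exact Functor.map_zero _ _ _

end NExactCat

/-!
Admissible epimorphisms are the covers of a Grothendieck topology on `M`, and weakly effaceable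
functors are those whose sections vanish locally. An injective sheaf `I`, made additive as
`V ↦ Hom(H_V, I)`, is therefore injective with respect to sequences which are exact up to weakly
effaceable functors. Sheafification does not produce additive functors in general, whence the
detour through additivization.

Since `Hom(-, A)` is exact on admissible sequences, `H_A` has a coresolution `0 → H_A → I⁰ → ⋯ → Iⁿ`
by such functors which is objectwise exact, so that morphisms from representables lift along it. An
`n`-fold extension of `H_B` by `H_A` has a class in `Hom(H_B, Iⁿ)` modulo `Hom(H_B, Iⁿ⁻¹)`, namely
the last component of an extension of `H_A → H_A` to a morphism of complexes, and this class is
constant along a zigzag. If admissible sequences `Z` and `W` have the same class, the difference of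
their morphisms into the coresolution is a boundary; this obstruction being zero, the identity of
the last term extends to a morphism `Z → W` which is the identity on both ends. By symmetry there
is a morphism `W → Z`, and an endomorphism of an `n`-exact sequence which is the identity on the
first term is homotopic to the identity.
-/

universe v

namespace NExactCat

section DependentChoice

variable {α : ℕ → Type*} [∀ i, Nonempty (α i)] {P : ∀ i, α i → Prop}
  {R : ∀ i, α i → α (i + 1) → Prop}

lemma exists_seq_ascending (n : ℕ) {a : α 0} (ha : P 0 a)
    (step : ∀ i < n, ∀ x, P i x → ∃ y, P (i + 1) y ∧ R i x y) :
    ∃ s : ∀ i, α i, s 0 = a ∧ P n (s n) ∧ ∀ i < n, R i (s i) (s (i + 1)) := by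
  induction n with
  | zero =>
    exact ⟨Function.update (fun _ => Classical.arbitrary _) 0 a, by simp, by simpa using ha,
      by simp⟩
  | succ n ih =>
    obtain ⟨s, hs0, hsn, hs⟩ := ih fun i hi => step i (by lia)
    obtain ⟨y, hy, hR⟩ := step n n.lt_succ_self _ hsn
    refine ⟨Function.update s (n + 1) y, by simpa using hs0, by simpa using hy, fun i hi => ?_⟩
    rcases Nat.lt_succ_iff_lt_or_eq.1 hi with hi | rfl
    · simpa [hi.ne, (Nat.lt_succ_of_lt hi).ne] using hs i hi
    · simpa using hR

lemma exists_seq_descending (n : ℕ) {a : α n} (ha : P n a)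
    (step : ∀ i < n, ∀ y, P (i + 1) y → ∃ x, P i x ∧ R i x y) :
    ∃ s : ∀ i, α i, P 0 (s 0) ∧ s n = a ∧ ∀ i < n, R i (s i) (s (i + 1)) := by
  induction n with
  | zero =>
    exact ⟨Function.update (fun _ => Classical.arbitrary _) 0 a, by simpa using ha, by simp,
      by simp⟩
  | succ n ih =>
    obtain ⟨x, hx, hR⟩ := step n n.lt_succ_self a ha
    obtain ⟨s, hs0, rfl, hs⟩ := ih hx fun i hi => step i (by lia)
    refine ⟨Function.update s (n + 1) a, by simpa using hs0, by simp, fun i hi => ?_⟩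
    rcases Nat.lt_succ_iff_lt_or_eq.1 hi with hi | rfl
    · simpa [hi.ne, (Nat.lt_succ_of_lt hi).ne] using hs i hi
    · simpa using hR

end DependentChoice

section Sequences

variable {C D : Type*} [Category* C] [Category* D] {X Y : ℕ → C} {n : ℕ}
  {d : ∀ i, X i ⟶ X (i + 1)} {δ : ∀ i, Y i ⟶ Y (i + 1)}

/-- `f` commutes with the differentials `d i` and `δ i` for `i ≤ n`, i.e. it is a morphism
between complexes concentrated in degrees `0, …, n+1`. -/
def IsChainMap (n : ℕ) (d : ∀ i, X i ⟶ X (i + 1)) (δ : ∀ i, Y i ⟶ Y (i + 1))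
    (f : ∀ i, X i ⟶ Y i) : Prop :=
  ∀ i ≤ n, d i ≫ f (i + 1) = f i ≫ δ i

namespace IsChainMap

lemma id : IsChainMap n d d fun i => 𝟙 (X i) := fun i _ => by simp

lemma comp {Z : ℕ → C} {ε : ∀ i, Z i ⟶ Z (i + 1)} {f : ∀ i, X i ⟶ Y i} {g : ∀ i, Y i ⟶ Z i}
    (hf : IsChainMap n d δ f) (hg : IsChainMap n δ ε g) :
    IsChainMap n d ε fun i => f i ≫ g i := fun i hi => by
  rw [← Category.assoc, hf i hi, Category.assoc, hg i hi, Category.assoc]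

lemma map (F : C ⥤ D) {f : ∀ i, X i ⟶ Y i} (hf : IsChainMap n d δ f) :
    IsChainMap n (fun i => F.map (d i)) (fun i => F.map (δ i)) fun i => F.map (f i) :=
  fun i hi => by simp only [← F.map_comp, hf i hi]

end IsChainMap

variable [Preadditive C]

lemma IsChainMap.sub {f g : ∀ i, X i ⟶ Y i} (hf : IsChainMap n d δ f)
    (hg : IsChainMap n d δ g) : IsChainMap n d δ fun i => f i - g i := fun i hi => by
  rw [Preadditive.comp_sub, Preadditive.sub_comp, hf i hi, hg i hi]

/-- `a` is null-homotopic as a morphism of complexes in degrees `0, …, n+1`; the component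
`s i : X (i + 1) ⟶ Y i` of the homotopy is indexed by its target. -/
def NullHomotopic (n : ℕ) (d : ∀ i, X i ⟶ X (i + 1)) (δ : ∀ i, Y i ⟶ Y (i + 1))
    (a : ∀ i, X i ⟶ Y i) : Prop :=
  ∃ s : ∀ i, X (i + 1) ⟶ Y i, a 0 = d 0 ≫ s 0 ∧
    (∀ i < n, a (i + 1) = d (i + 1) ≫ s (i + 1) + s i ≫ δ i) ∧ a (n + 1) = s n ≫ δ n

/-- `g` has the weak cokernel property of `f` with respect to morphisms into `J`. -/
def WeakCokernelFor {A B D : C} (f : A ⟶ B) (g : B ⟶ D) (J : C) : Prop :=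
  ∀ w : B ⟶ J, f ≫ w = 0 → ∃ v, g ≫ v = w

/-- `f` has the weak kernel property of `g` with respect to morphisms out of `T`. -/
def WeakKernelFor {A B D : C} (f : A ⟶ B) (g : B ⟶ D) (T : C) : Prop :=
  ∀ w : T ⟶ B, w ≫ g = 0 → ∃ v, v ≫ f = w

lemma IsChainMap.exists_of_weakCokernelFor (hδ : ∀ i < n, δ i ≫ δ (i + 1) = 0)
    (hd : ∀ i < n, WeakCokernelFor (d i) (d (i + 1)) (Y (i + 2)))
    (a : X 0 ⟶ Y 0) (ha : ∃ b, d 0 ≫ b = a ≫ δ 0) :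
    ∃ f, f 0 = a ∧ IsChainMap n d δ f := by
  obtain ⟨f, hf0, -, hf⟩ := exists_seq_ascending (α := fun i => X i ⟶ Y i)
    (P := fun i f => i ≤ n → ∃ v, d i ≫ v = f ≫ δ i)
    (R := fun i f f' => d i ≫ f' = f ≫ δ i) (n + 1) (fun _ => ha) fun i hi f hf => by
      obtain ⟨v, hv⟩ := hf (by lia)
      refine ⟨v, fun hi' => hd i hi' _ ?_, hv⟩
      rw [← Category.assoc, hv, Category.assoc, hδ i hi', comp_zero]
  exact ⟨f, hf0, fun i hi => hf i (by lia)⟩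

lemma IsChainMap.exists_of_weakKernelFor (hd : ∀ i < n, d i ≫ d (i + 1) = 0)
    (hδ : ∀ i < n, WeakKernelFor (δ i) (δ (i + 1)) (X i))
    (b : X (n + 1) ⟶ Y (n + 1)) (hb : ∃ a, a ≫ δ n = d n ≫ b) :
    ∃ f, f (n + 1) = b ∧ IsChainMap n d δ f := by
  obtain ⟨f, -, hfn, hf⟩ := exists_seq_descending (α := fun i => X i ⟶ Y i)
    (P := fun | 0, _ => True | i + 1, f => ∃ v, v ≫ δ i = d i ≫ f)
    (R := fun i f f' => d i ≫ f' = f ≫ δ i) (n + 1) hb fun i hi f hf => by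
      obtain ⟨v, hv⟩ := hf
      refine ⟨v, ?_, hv.symm⟩
      cases i with
      | zero => trivial
      | succ i =>
        refine hδ i (by lia) _ ?_
        rw [Category.assoc, hv, ← Category.assoc, hd i (by lia), zero_comp]
  exact ⟨f, hfn, fun i hi => hf i (by lia)⟩

lemma IsChainMap.nullHomotopic_of_weakCokernelFor {a : ∀ i, X i ⟶ Y i}
    (ha : IsChainMap n d δ a) (hδ : ∀ i < n, δ i ≫ δ (i + 1) = 0)
    (hd : ∀ i < n, WeakCokernelFor (d i) (d (i + 1)) (Y (i + 1)))
    (hdn : ∀ w : X (n + 1) ⟶ Y (n + 1), d n ≫ w = 0 → w = 0)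
    (t : X 1 ⟶ Y 0) (ht : a 0 = d 0 ≫ t) : NullHomotopic n d δ a := by
  obtain ⟨s, rfl, hsn, hs⟩ := exists_seq_ascending (α := fun i => X (i + 1) ⟶ Y i)
    (P := fun i s => d i ≫ (a (i + 1) - s ≫ δ i) = 0)
    (R := fun i s s' => a (i + 1) = d (i + 1) ≫ s' + s ≫ δ i) n (a := t)
    (by rw [Preadditive.comp_sub, ha 0 n.zero_le, ht, Category.assoc, sub_self])
    fun i hi s hs => by
      obtain ⟨s', hs'⟩ := hd i hi _ hs
      refine ⟨s', ?_, by rw [hs', sub_add_cancel]⟩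
      rw [Preadditive.comp_sub, ha (i + 1) hi, ← Category.assoc, hs', Preadditive.sub_comp,
        Category.assoc, hδ i hi, comp_zero, sub_zero, sub_self]
  exact ⟨s, ht, hs, sub_eq_zero.1 (hdn _ hsn)⟩

lemma IsChainMap.nullHomotopic_of_weakKernelFor {a : ∀ i, X i ⟶ Y i}
    (ha : IsChainMap n d δ a) (hd : ∀ i < n, d i ≫ d (i + 1) = 0)
    (hδ : ∀ i < n, WeakKernelFor (δ i) (δ (i + 1)) (X (i + 1)))
    (hδ0 : ∀ w : X 0 ⟶ Y 0, w ≫ δ 0 = 0 → w = 0)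
    (t : X (n + 1) ⟶ Y n) (ht : a (n + 1) = t ≫ δ n) : NullHomotopic n d δ a := by
  obtain ⟨s, hs0, rfl, hs⟩ := exists_seq_descending (α := fun i => X (i + 1) ⟶ Y i)
    (P := fun i s => (a i - d i ≫ s) ≫ δ i = 0)
    (R := fun i s s' => a (i + 1) = d (i + 1) ≫ s' + s ≫ δ i) n (a := t)
    (by rw [Preadditive.sub_comp, ← ha n le_rfl, ht, Category.assoc, sub_self])
    fun i hi s hs => by
      obtain ⟨s', hs'⟩ := hδ i hi _ hs
      refine ⟨s', ?_, by rw [hs', add_sub_cancel]⟩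
      rw [Preadditive.sub_comp, ← ha i hi.le, Category.assoc, hs', Preadditive.comp_sub,
        ← Category.assoc, hd i hi, zero_comp, sub_zero, sub_self]
  exact ⟨s, sub_eq_zero.1 (hδ0 _ hs0), hs, ht⟩

lemma IsChainMap.exists_sub_comp_zero {f : ∀ i, X i ⟶ Y i} (hf : IsChainMap n d δ f)
    (hn : 1 ≤ n) (hδ : δ 0 ≫ δ 1 = 0) (s : X 1 ⟶ Y 0) :
    ∃ g, IsChainMap n d δ g ∧ g 0 = f 0 - d 0 ≫ s ∧ g (n + 1) = f (n + 1) := by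
  refine ⟨fun | 0 => f 0 - d 0 ≫ s | 1 => f 1 - s ≫ δ 0 | i + 2 => f (i + 2), fun i hi => ?_,
    rfl, ?_⟩
  · match i with
    | 0 => simp [hf 0 hi]
    | 1 => simp [hf 1 hi, hδ]
    | i + 2 => exact hf (i + 2) hi
  · obtain ⟨m, rfl⟩ := Nat.exists_eq_add_of_le' hn
    rfl

end Sequences

section Yoneda

variable {C : Type*} [Category.{v} C] [Preadditive C] {X Y : C}

instance : (preadditiveYoneda (C := C)).Additive where
  map_add {X _ f g} := by
    ext V (h : V.unop ⟶ X)
    exact Preadditive.comp_add _ _ _ h f g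

variable {F G : Cᵒᵖ ⥤ AddCommGrpCat.{v}}

lemma app_eq_map_app_id (c : preadditiveYoneda.obj X ⟶ F) (f : Y ⟶ X) :
    c.app (op Y) f = F.map f.op (c.app (op X) (𝟙 X)) := by
  have h := NatTrans.naturality_apply c f.op (𝟙 X : X ⟶ X)
  exact (congrArg (c.app (op Y)) (Category.comp_id f).symm).trans h

lemma preadditiveYoneda_hom_ext {c c' : preadditiveYoneda.obj X ⟶ F}
    (h : c.app (op X) (𝟙 X) = c'.app (op X) (𝟙 X)) : c = c' := by
  ext V (f : V.unop ⟶ X)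
  exact (app_eq_map_app_id c f).trans ((congrArg _ h).trans (app_eq_map_app_id c' f).symm)

/-- The Yoneda lemma for additive presheaves of abelian groups: morphisms `H_X ⟶ F` correspond to
elements of `F(X)`. -/
def preadditiveYonedaEquiv [F.Additive] : (preadditiveYoneda.obj X ⟶ F) ≃+ F.obj (op X) where
  toFun c := c.app (op X) (𝟙 X)
  invFun x :=
    { app V := AddCommGrpCat.ofHom (AddMonoidHom.mk' (fun f : V.unop ⟶ X => F.map f.op x)
        fun f g => congrArg (fun t => (ConcreteCategory.hom t) x)
          (F.map_add (f := Quiver.Hom.op f) (g := Quiver.Hom.op g)))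
      naturality V W f := by
        ext (g : V.unop ⟶ X)
        change F.map (f.unop ≫ g).op x = F.map f (F.map g.op x)
        simp }
  left_inv c := preadditiveYoneda_hom_ext (app_eq_map_app_id c (𝟙 X)).symm
  right_inv x := by
    change F.map (𝟙 _) x = x
    simp
  map_add' _ _ := rfl

lemma preadditiveYonedaEquiv_comp [F.Additive] [G.Additive] (c : preadditiveYoneda.obj X ⟶ F)
    (u : F ⟶ G) : preadditiveYonedaEquiv (c ≫ u) = u.app (op X) (preadditiveYonedaEquiv c) := rfl

lemma preadditiveYonedaEquiv_map_comp [F.Additive] (f : Y ⟶ X)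
    (c : preadditiveYoneda.obj X ⟶ F) :
    preadditiveYonedaEquiv (preadditiveYoneda.map f ≫ c) =
      F.map f.op (preadditiveYonedaEquiv c) :=
  (congrArg (c.app (op Y)) (Category.id_comp f)).trans (app_eq_map_app_id c f)

lemma weakKernelFor_preadditiveYoneda [F.Additive] [G.Additive] {H : Cᵒᵖ ⥤ AddCommGrpCat.{v}}
    {α : F ⟶ G} {β : G ⟶ H} (h : Function.Exact (α.app (op X)) (β.app (op X))) :
    WeakKernelFor α β (preadditiveYoneda.obj X) := fun w hw => by
  obtain ⟨x, hx⟩ := (h (preadditiveYonedaEquiv w)).1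
    (congrArg (fun c : preadditiveYoneda.obj X ⟶ H => c.app (op X) (𝟙 X)) hw)
  refine ⟨preadditiveYonedaEquiv.symm x, preadditiveYonedaEquiv.injective ?_⟩
  rw [preadditiveYonedaEquiv_comp, AddEquiv.apply_symm_apply, hx]

end Yoneda

section Additivization

variable {M : Type u} [SmallCategory M] [Preadditive M] {F G : Mᵒᵖ ⥤ AddCommGrpCat.{u}}

/-- The presheaf `V ↦ Hom(H_V, F)`, the universal additive presheaf with a morphism to `F`. -/
noncomputable def additivization (F : Mᵒᵖ ⥤ AddCommGrpCat.{u}) : Mᵒᵖ ⥤ AddCommGrpCat.{u} :=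
  preadditiveYoneda.op ⋙ preadditiveYoneda.obj F

instance : (additivization F).Additive :=
  inferInstanceAs (preadditiveYoneda.op ⋙ preadditiveYoneda.obj F).Additive

/-- The counit `Hom(H_V, F) ⟶ F(V)` given by evaluation at `𝟙 V`. -/
noncomputable def additivizationEval (F : Mᵒᵖ ⥤ AddCommGrpCat.{u}) : additivization F ⟶ F where
  app V := AddCommGrpCat.ofHom (AddMonoidHom.mk'
    (fun c : preadditiveYoneda.obj V.unop ⟶ F => c.app V (𝟙 V.unop)) fun _ _ => rfl)
  naturality V W f := by
    ext (c : preadditiveYoneda.obj V.unop ⟶ F)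
    exact (congrArg (c.app W) (Category.id_comp f.unop)).trans (app_eq_map_app_id c f.unop)

/-- The factorization of a morphism out of an additive presheaf through the additivization of its
target. -/
noncomputable def additivizationLift [G.Additive] (v : G ⟶ F) : G ⟶ additivization F where
  app V := AddCommGrpCat.ofHom ((Preadditive.rightComp _ v).comp
    (preadditiveYonedaEquiv (X := V.unop)).symm.toAddMonoidHom)
  naturality V W f := by
    ext (x : G.obj (op V.unop))
    change preadditiveYonedaEquiv.symm (G.map f x) ≫ v =
      preadditiveYoneda.map f.unop ≫ preadditiveYonedaEquiv.symm x ≫ v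
    rw [← Category.assoc]
    congr 1
    apply preadditiveYonedaEquiv.injective
    rw [preadditiveYonedaEquiv_map_comp, AddEquiv.apply_symm_apply, AddEquiv.apply_symm_apply]
    rfl

lemma additivizationLift_eval [G.Additive] (v : G ⟶ F) :
    additivizationLift v ≫ additivizationEval F = v := by
  ext V x
  exact congrArg (v.app V) (preadditiveYonedaEquiv.apply_symm_apply x)

lemma additivizationLift_app_injective [G.Additive] {v : G ⟶ F} {X : Mᵒᵖ}
    (hv : Function.Injective (v.app X)) : Function.Injective ((additivizationLift v).app X) := by
  rw [← additivizationLift_eval v] at hv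
  exact Function.Injective.of_comp (f := (additivizationEval F).app X) hv

lemma additivization_hom_ext {u v : G ⟶ additivization F}
    (h : u ≫ additivizationEval F = v ≫ additivizationEval F) : u = v := by
  ext V x
  exact preadditiveYoneda_hom_ext (congrArg (fun w : G ⟶ F => w.app V x) h)

end Additivization

section LocallyExact

variable {M : Type u} [SmallCategory M] {J : GrothendieckTopology M}
  {F G H I : Mᵒᵖ ⥤ AddCommGrpCat.{u}} {α : F ⟶ G} {β : G ⟶ H}

/-- Every section of `G` killed by `β` lies locally in the image of `α`; if `α ≫ β = 0`, this is
exactness at `G` after sheafification. -/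
def LocallyExact (J : GrothendieckTopology M) (α : F ⟶ G) (β : G ⟶ H) : Prop :=
  ∀ (X : M) (x : G.obj (op X)), β.app (op X) x = 0 → Presheaf.imageSieve α x ∈ J X

lemma LocallyExact.of_exact (h : ∀ X, Function.Exact (α.app X) (β.app X)) :
    LocallyExact J α β := fun X x hx => by
  obtain ⟨y, rfl⟩ := (h (op X) x).1 hx
  rw [Presheaf.imageSieve_app]
  exact J.top_mem X

lemma LocallyExact.kernel_ι_comp_eq_zero (h : LocallyExact J α β)
    (hI : Presheaf.IsSeparated J I) {w : G ⟶ I} (hw : α ≫ w = 0) : kernel.ι β ≫ w = 0 := by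
  ext X x
  have hx : β.app X ((kernel.ι β).app X x) = 0 :=
    congrArg (fun c : kernel β ⟶ H => c.app X x) (kernel.condition β)
  refine hI _ _ (h X.unop _ hx) _ _ fun V f ⟨y, hy⟩ => ?_
  calc I.map f.op (w.app X ((kernel.ι β).app X x))
      = w.app (op V) (G.map f.op ((kernel.ι β).app X x)) :=
        (NatTrans.naturality_apply w f.op _).symm
    _ = (α ≫ w).app (op V) y := congrArg (w.app (op V)) hy.symm
    _ = I.map f.op 0 := by
      rw [hw, map_zero]
      rfl

lemma LocallyExact.weakCokernelFor_of_injective [Injective I] (h : LocallyExact J α β)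
    (hI : Presheaf.IsSeparated J I) : WeakCokernelFor α β I := fun w hw =>
  have hS : (ShortComplex.mk (kernel.ι β) β (kernel.condition β)).Exact :=
    ShortComplex.exact_of_f_is_kernel _ (kernelIsKernel β)
  ⟨hS.descToInjective w (h.kernel_ι_comp_eq_zero hI hw), hS.comp_descToInjective w _⟩

lemma toSheafify_app_injective (hG : Presheaf.IsSeparated J G) (X : Mᵒᵖ) :
    Function.Injective ((toSheafify J G).app X) := fun x y hxy =>
  hG _ _ (Presheaf.equalizerSieve_mem J (toSheafify J G) x y hxy) x y fun _ _ hf => hf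

variable [Preadditive M]

/-- An additive presheaf with the extension property of an injective object along locally exact
sequences of presheaves with additive third term; it plays the role of an injective object of the
localization of `Mod(M)` at the weakly effaceable functors. -/
structure EffInjective (J : GrothendieckTopology M) (I : Mᵒᵖ ⥤ AddCommGrpCat.{u}) : Prop where
  additive : I.Additive
  weakCokernelFor : ∀ {F G H : Mᵒᵖ ⥤ AddCommGrpCat.{u}} [H.Additive] {α : F ⟶ G} {β : G ⟶ H},
    LocallyExact J α β → WeakCokernelFor α β I

lemma EffInjective.eq_zero_of_comp_eq_zero (hI : EffInjective J I) [G.Additive]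
    (h : LocallyExact J α (0 : G ⟶ G)) {w : G ⟶ I} (hw : α ≫ w = 0) : w = 0 := by
  obtain ⟨v, rfl⟩ := hI.weakCokernelFor h w hw
  exact zero_comp

lemma effInjective_additivization [Injective I] (hI : Presheaf.IsSeparated J I) :
    EffInjective J (additivization I) where
  additive := inferInstance
  weakCokernelFor h w hw := by
    obtain ⟨v, hv⟩ := h.weakCokernelFor_of_injective hI (w ≫ additivizationEval I)
      (by rw [← Category.assoc, hw, zero_comp])
    refine ⟨additivizationLift v, additivization_hom_ext ?_⟩
    rw [Category.assoc, additivizationLift_eval, hv]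

/-- An `Eff`-injective presheaf into which `G` maps, see `toEffHull`: the additivization of an
injective sheaf containing the sheafification of `G`. -/
noncomputable def effHull (J : GrothendieckTopology M) (G : Mᵒᵖ ⥤ AddCommGrpCat.{u}) :
    Mᵒᵖ ⥤ AddCommGrpCat.{u} :=
  additivization ((sheafToPresheaf J _).obj (Injective.under ((presheafToSheaf J _).obj G)))

lemma effInjective_effHull (J : GrothendieckTopology M) (G : Mᵒᵖ ⥤ AddCommGrpCat.{u}) :
    EffInjective J (effHull J G) :=
  have := Injective.injective_of_adjoint (sheafificationAdjunction J AddCommGrpCat.{u})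
    (Injective.under ((presheafToSheaf J _).obj G))
  effInjective_additivization (Sheaf.isSeparated _)

/-- The comparison morphism of `G` with `effHull J G`; it is injective if `G` is separated. -/
noncomputable def toEffHull (J : GrothendieckTopology M) (G : Mᵒᵖ ⥤ AddCommGrpCat.{u})
    [G.Additive] : G ⟶ effHull J G :=
  additivizationLift (toSheafify J G ≫ (sheafToPresheaf J _).map (Injective.ι _))

lemma toEffHull_app_injective [G.Additive] (hG : Presheaf.IsSeparated J G) (X : Mᵒᵖ) :
    Function.Injective ((toEffHull J G).app X) := by
  have hι : Mono (((sheafToPresheaf J _).map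
      (Injective.ι ((presheafToSheaf J AddCommGrpCat.{u}).obj G))).app X) := inferInstance
  exact additivizationLift_app_injective
    (((AddCommGrpCat.mono_iff_injective _).1 hι).comp (toSheafify_app_injective hG X))

end LocallyExact

section Site

variable {M : Type u} [SmallCategory M]

/-- The sequence `0 ⟶ F 0 ⟶ ⋯ ⟶ F (n + 1) ⟶ 0` with differentials `τ` is exact, up to presheaves
which vanish locally for `J`. -/
structure LocallyExactSeq (J : GrothendieckTopology M) (n : ℕ) {F : ℕ → Mᵒᵖ ⥤ AddCommGrpCat.{u}}
    (τ : ∀ i, F i ⟶ F (i + 1)) : Prop where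
  zero : LocallyExact J (0 : F 0 ⟶ F 0) (τ 0)
  succ : ∀ i < n, LocallyExact J (τ i) (τ (i + 1))
  last : LocallyExact J (τ n) (0 : F (n + 1) ⟶ F (n + 1))

variable {n : ℕ} {𝒳 : Set (NSeq M)}

lemma admEpi_d {P : NSeq M} (hP : P ∈ 𝒳) : AdmEpi n 𝒳 (P.d n) :=
  ⟨P, hP, rfl, rfl, by simp⟩

variable [Preadditive M]

lemma LeftNExact.weakKernelFor {S : NSeq M} (hS : LeftNExact n S) (T : M) {i : ℕ} (hi : i < n) :
    WeakKernelFor (S.d i) (S.d (i + 1)) T :=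
  fun w hw => (hS.2 T i hi w).1 hw

lemma RightNExact.weakCokernelFor {S : NSeq M} (hS : RightNExact n S) (T : M) {i : ℕ}
    (hi : i < n) : WeakCokernelFor (S.d i) (S.d (i + 1)) T :=
  fun w hw => (hS.2 T i hi w).1 hw

lemma RightNExact.eq_zero_of_comp_eq_zero {S : NSeq M} (hS : RightNExact n S) {T : M}
    {w : S.X (n + 1) ⟶ T} (hw : S.d n ≫ w = 0) : w = 0 :=
  hS.1 T (hw.trans comp_zero.symm)

/-- A class of `n`-exact sequences whose admissible epimorphisms are the covers of a Grothendieck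
topology. -/
structure IsNExactSite (n : ℕ) (𝒳 : Set (NSeq M)) : Prop where
  nExact : ∀ Z ∈ 𝒳, IsNExactSeq n Z
  exists_admEpi : ∀ X : M, ∃ (Y : M) (p : Y ⟶ X), AdmEpi n 𝒳 p
  admEpi_comp : ∀ {A B C : M} (p : A ⟶ B) (q : B ⟶ C),
    AdmEpi n 𝒳 p → AdmEpi n 𝒳 q → AdmEpi n 𝒳 (p ≫ q)
  exists_lift : ∀ {A B X : M} {g : A ⟶ B}, AdmEpi n 𝒳 g → ∀ f : X ⟶ B,
    ∃ (Y : M) (p : Y ⟶ X) (q : Y ⟶ A), AdmEpi n 𝒳 p ∧ q ≫ g = p ≫ f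

lemma IsNExactStructure.isNExactSite [HasFiniteBiproducts M] (h𝒳 : IsNExactStructure n 𝒳)
    (hn : 1 ≤ n) : IsNExactSite n 𝒳 := by
  have exists_lift : ∀ {A B X : M} {g : A ⟶ B}, AdmEpi n 𝒳 g → ∀ f : X ⟶ B,
      ∃ (Y : M) (p : Y ⟶ X) (q : Y ⟶ A), AdmEpi n 𝒳 p ∧ q ≫ g = p ≫ f := by
    rintro A B X g ⟨P, hP, rfl, rfl, hg⟩ f
    obtain ⟨m, rfl⟩ := Nat.exists_eq_add_of_le' hn
    obtain ⟨T, a, rfl, han, ha, -, hT⟩ := h𝒳.pullback P hP X f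
    have hsq := ha m le_rfl
    rw [han] at hsq
    exact ⟨_, T.d m, a m, hT, by simpa [hg] using hsq.symm⟩
  refine ⟨h𝒳.nExact, fun X => ?_, h𝒳.epiComp, exists_lift⟩
  obtain ⟨P, hP, -⟩ := h𝒳.zero_mem
  obtain ⟨Y, p, -, hp, -⟩ := exists_lift (admEpi_d hP) (0 : X ⟶ _)
  exact ⟨Y, p, hp⟩

namespace IsNExactSite

/-- The topology whose covering sieves are those containing an admissible epimorphism. A presheaf
is weakly effaceable exactly when all its sections vanish locally for this topology. -/
def topology (h𝒳 : IsNExactSite n 𝒳) : GrothendieckTopology M where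
  sieves X := {S | ∃ (Y : M) (p : Y ⟶ X), AdmEpi n 𝒳 p ∧ S p}
  top_mem' X := by
    obtain ⟨Y, p, hp⟩ := h𝒳.exists_admEpi X
    exact ⟨Y, p, hp, trivial⟩
  pullback_stable' X Y S f := by
    rintro ⟨V, g, hg, hS⟩
    obtain ⟨V', p, q, hp, hq⟩ := h𝒳.exists_lift hg f
    refine ⟨V', p, hp, ?_⟩
    change S (p ≫ f)
    rw [← hq]
    exact S.downward_closed hS q
  transitive' X S := by
    rintro ⟨V, g, hg, hS⟩ R hR
    obtain ⟨V', p, hp, hRp⟩ := hR hS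
    exact ⟨V', p ≫ g, h𝒳.admEpi_comp p g hp hg, hRp⟩

lemma isSeparated_topology (h𝒳 : IsNExactSite n 𝒳) {F : Mᵒᵖ ⥤ AddCommGrpCat.{u}}
    (hF : ∀ P ∈ 𝒳, Function.Injective (F.map (P.d n).op)) :
    Presheaf.IsSeparated h𝒳.topology F := by
  rintro X S ⟨Y, p, ⟨P, hP, rfl, rfl, hp⟩, hS⟩ x y hxy
  obtain rfl : P.d n = p := by simpa using hp
  exact hF P hP (hxy _ _ hS)

lemma locallyExactSeq_preadditiveYoneda (h𝒳 : IsNExactSite n 𝒳) {P : NSeq M} (hP : P ∈ 𝒳) :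
    LocallyExactSeq h𝒳.topology n fun i => preadditiveYoneda.map (P.d i) := by
  obtain ⟨-, hleft, -⟩ := h𝒳.nExact P hP
  refine ⟨.of_exact fun X (x : X.unop ⟶ P.X 0) => ⟨fun hx => ⟨0, ?_⟩, ?_⟩,
    fun i hi => .of_exact fun X => hleft.2 X.unop i hi, fun X (x : X ⟶ P.X (n + 1)) _ => ?_⟩
  · exact (hleft.1 X.unop (Eq.trans hx zero_comp.symm)).symm
  · rintro ⟨y, rfl⟩
    exact map_zero _
  · obtain ⟨V, p, q, hp, hq⟩ := h𝒳.exists_lift (admEpi_d hP) x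
    exact ⟨V, p, hp, q, hq⟩

end IsNExactSite

end Site

section ShortExact

variable {C : Type*} [Category* C] {S : ShortComplex (C ⥤ AddCommGrpCat.{v})} {X Y Z : C}

lemma shortExact_app_injective (hS : S.ShortExact) (X : C) : Function.Injective (S.f.app X) :=
  (hS.map_of_exact ((evaluation _ _).obj X)).ab_injective_f

lemma shortExact_app_exact (hS : S.ShortExact) (X : C) :
    Function.Exact (S.f.app X) (S.g.app X) :=
  (ShortComplex.ab_exact_iff_function_exact _).1 (hS.exact.map ((evaluation _ _).obj X))

lemma shortExact_app_surjective (hS : S.ShortExact) (X : C) : Function.Surjective (S.g.app X) :=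
  (hS.map_of_exact ((evaluation _ _).obj X)).ab_surjective_g

lemma exists_app_eq_and_map_eq_zero (hS : S.ShortExact) {f : X ⟶ Y} {g : Y ⟶ Z}
    (h₂ : S.X₂.map f ≫ S.X₂.map g = 0)
    (h₁ : ∀ a, S.X₁.map g a = 0 → ∃ b, S.X₁.map f b = a)
    {x : S.X₃.obj X} (hx : S.X₃.map f x = 0) : ∃ y, S.g.app X y = x ∧ S.X₂.map f y = 0 := by
  obtain ⟨y, rfl⟩ := shortExact_app_surjective hS X x
  obtain ⟨a, ha⟩ := (shortExact_app_exact hS Y (S.X₂.map f y)).1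
    ((NatTrans.naturality_apply S.g f y).trans hx)
  obtain ⟨b, rfl⟩ := h₁ a (shortExact_app_injective hS Z (by
    rw [NatTrans.naturality_apply, ha, map_zero]
    exact congrArg (fun t => (ConcreteCategory.hom t) y) h₂))
  refine ⟨y - S.f.app X b, ?_, ?_⟩
  · rw [map_sub, (shortExact_app_exact hS X).apply_apply_eq_zero, sub_zero]
  · rw [map_sub, ← NatTrans.naturality_apply, ha, sub_self]

lemma additive_of_epi [Preadditive C] {F G : C ⥤ AddCommGrpCat.{v}} [F.Additive] (π : F ⟶ G)
    [Epi π] : G.Additive where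
  map_add {X Y f g} := by
    rw [← cancel_epi (π.app X), Preadditive.comp_add, ← π.naturality, ← π.naturality,
      ← π.naturality, F.map_add, Preadditive.add_comp]

end ShortExact

section Acyclic

variable {M : Type u} [SmallCategory M] {n k : ℕ} {𝒳 : Set (NSeq M)}

/-- For every `P ∈ 𝒳` the sequence `0 ⟶ G (P.X (n + 1)) ⟶ ⋯ ⟶ G (P.X 0)` is exact at
`G (P.X (n + 1))` and at the `k` terms following it. -/
structure AcyclicUpTo (n : ℕ) (𝒳 : Set (NSeq M)) (k : ℕ) (G : Mᵒᵖ ⥤ AddCommGrpCat.{u}) :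
    Prop where
  injective : ∀ P ∈ 𝒳, Function.Injective (G.map (P.d n).op)
  exact : ∀ P ∈ 𝒳, ∀ i < n, n ≤ i + k → ∀ x, G.map (P.d i).op x = 0 →
    ∃ y, G.map (P.d (i + 1)).op y = x

variable [Preadditive M]

lemma NSeq.IsComplex.map_op_comp_eq_zero {P : NSeq M} (hP : P.IsComplex n)
    (F : Mᵒᵖ ⥤ AddCommGrpCat.{u}) [F.Additive] {i : ℕ} (hi : i < n) :
    F.map (P.d (i + 1)).op ≫ F.map (P.d i).op = 0 := by
  rw [← F.map_comp, ← op_comp, hP i hi]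
  exact F.map_zero _ _

lemma AcyclicUpTo.of_shortExact {S : ShortComplex (Mᵒᵖ ⥤ AddCommGrpCat.{u})}
    (hS : S.ShortExact) [S.X₂.Additive] (h𝒳 : ∀ P ∈ 𝒳, P.IsComplex n) (hk : k + 1 ≤ n)
    (h₁ : AcyclicUpTo n 𝒳 (k + 1) S.X₁) (h₂ : AcyclicUpTo n 𝒳 n S.X₂) :
    AcyclicUpTo n 𝒳 k S.X₃ := by
  have lift : ∀ P ∈ 𝒳, ∀ i < n, n ≤ i + 1 + k → ∀ x, S.X₃.map (P.d (i + 1)).op x = 0 →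
      ∃ y, S.g.app _ y = x ∧ S.X₂.map (P.d (i + 1)).op y = 0 := fun P hP i hi hik x hx =>
    exists_app_eq_and_map_eq_zero hS ((h𝒳 P hP).map_op_comp_eq_zero _ hi)
      (h₁.exact P hP i hi (by lia)) hx
  refine ⟨fun P hP => (injective_iff_map_eq_zero _).2 fun x hx => ?_, fun P hP i hi hik x hx => ?_⟩
  · obtain ⟨m, rfl⟩ := Nat.exists_eq_add_of_le' (k.succ_pos.trans_le hk)
    obtain ⟨y, rfl, hy⟩ := lift P hP m m.lt_succ_self (by lia) x hx
    rw [(injective_iff_map_eq_zero _).1 (h₂.injective P hP) y hy, map_zero]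
  · obtain ⟨j, rfl⟩ := Nat.exists_eq_add_of_le' (show 1 ≤ i by lia)
    obtain ⟨y, rfl, hy⟩ := lift P hP j (by lia) hik x hx
    obtain ⟨z, rfl⟩ := h₂.exact P hP (j + 1) hi (by lia) y hy
    exact ⟨S.g.app _ z, (NatTrans.naturality_apply S.g _ z).symm⟩

lemma IsNExactSite.acyclicUpTo_preadditiveYoneda (h𝒳 : IsNExactSite n 𝒳) (A : M) :
    AcyclicUpTo n 𝒳 n (preadditiveYoneda.obj A) where
  injective P hP := (h𝒳.nExact P hP).2.2.1 A
  exact P hP _ hi _ x hx := (h𝒳.nExact P hP).2.2.weakCokernelFor A hi x hx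

lemma EffInjective.acyclicUpTo {h𝒳 : IsNExactSite n 𝒳} {I : Mᵒᵖ ⥤ AddCommGrpCat.{u}}
    (hI : EffInjective h𝒳.topology I) : AcyclicUpTo n 𝒳 n I := by
  have := hI.additive
  refine ⟨fun P hP => (injective_iff_map_eq_zero _).2 fun x hx => ?_, fun P hP i hi _ x hx => ?_⟩
  · rw [← map_eq_zero_iff _ (preadditiveYonedaEquiv (F := I)).symm.injective]
    refine hI.eq_zero_of_comp_eq_zero (h𝒳.locallyExactSeq_preadditiveYoneda hP).last
      (preadditiveYonedaEquiv.injective ?_)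
    rw [preadditiveYonedaEquiv_map_comp, AddEquiv.apply_symm_apply, hx, map_zero]
  · obtain ⟨c, hc⟩ := hI.weakCokernelFor
      ((h𝒳.locallyExactSeq_preadditiveYoneda hP).succ i hi) (preadditiveYonedaEquiv.symm x)
      (preadditiveYonedaEquiv.injective (by
        rw [preadditiveYonedaEquiv_map_comp, AddEquiv.apply_symm_apply, hx, map_zero]))
    refine ⟨preadditiveYonedaEquiv c, ?_⟩
    rw [← preadditiveYonedaEquiv_map_comp, hc, AddEquiv.apply_symm_apply]

end Acyclic

section Coresolution

variable {M : Type u} [SmallCategory M] [Preadditive M] {J : GrothendieckTopology M} {n : ℕ}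

/-- The sequence `0 ⟶ K 0 ⟶ ⋯ ⟶ K (n + 1)` of additive presheaves is exact and the terms in
positive degrees are `Eff`-injective. -/
structure IsCoresolution (J : GrothendieckTopology M) (n : ℕ) {K : ℕ → Mᵒᵖ ⥤ AddCommGrpCat.{u}}
    (δ : ∀ i, K i ⟶ K (i + 1)) : Prop where
  additive_zero : (K 0).Additive
  injective : ∀ X, Function.Injective ((δ 0).app X)
  exact : ∀ i < n, ∀ X, Function.Exact ((δ i).app X) ((δ (i + 1)).app X)
  effInjective : ∀ i ≤ n, EffInjective J (K (i + 1))

namespace IsCoresolution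

variable {K : ℕ → Mᵒᵖ ⥤ AddCommGrpCat.{u}} {δ : ∀ i, K i ⟶ K (i + 1)}

lemma additive (hK : IsCoresolution J n δ) {i : ℕ} (hi : i ≤ n + 1) : (K i).Additive := by
  match i with
  | 0 => exact hK.additive_zero
  | i + 1 => exact (hK.effInjective i (by lia)).additive

lemma comp_eq_zero (hK : IsCoresolution J n δ) {i : ℕ} (hi : i < n) : δ i ≫ δ (i + 1) = 0 := by
  ext X x
  exact (hK.exact i hi X).apply_apply_eq_zero x

lemma mono (hK : IsCoresolution J n δ) : Mono (δ 0) :=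
  (NatTrans.mono_iff_mono_app _).2 fun X => (AddCommGrpCat.mono_iff_injective _).2 (hK.injective X)

lemma weakKernelFor (hK : IsCoresolution J n δ) {i : ℕ} (hi : i < n) (V : M) :
    WeakKernelFor (δ i) (δ (i + 1)) (preadditiveYoneda.obj V) :=
  have := hK.additive (i := i) (by lia)
  have := hK.additive (i := i + 1) (by lia)
  weakKernelFor_preadditiveYoneda (hK.exact i hi (op V))

end IsCoresolution

variable (J) (G : Mᵒᵖ ⥤ AddCommGrpCat.{u}) [G.Additive]

/-- The iterated cokernels of the comparison morphisms `toEffHull`, starting with `G`. -/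
noncomputable def cosyzygy : ℕ → Mᵒᵖ ⥤+ AddCommGrpCat.{u}
  | 0 => .of G
  | i + 1 =>
    have := (effInjective_effHull J (cosyzygy i).obj).additive
    have := additive_of_epi (cokernel.π (toEffHull J (cosyzygy i).obj))
    .of (cokernel (toEffHull J (cosyzygy i).obj))

/-- The terms `G, I⁰, I¹, …` of the coresolution of `G` obtained by splicing the morphisms
`toEffHull` of the cosyzygies. -/
noncomputable def coresolutionObj : ℕ → Mᵒᵖ ⥤ AddCommGrpCat.{u}
  | 0 => G
  | i + 1 => effHull J (cosyzygy J G i).obj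

/-- The projection of the `i`-th term of the coresolution onto the `i`-th cosyzygy. -/
noncomputable def toCosyzygy : ∀ i, coresolutionObj J G i ⟶ (cosyzygy J G i).obj
  | 0 => 𝟙 G
  | i + 1 => cokernel.π (toEffHull J (cosyzygy J G i).obj)

/-- The differentials of the coresolution. -/
noncomputable def coresolutionD (i : ℕ) : coresolutionObj J G i ⟶ coresolutionObj J G (i + 1) :=
  toCosyzygy J G i ≫ toEffHull J (cosyzygy J G i).obj

/-- The sequence `0 ⟶ Ωⁱ ⟶ Iⁱ ⟶ Ωⁱ⁺¹ ⟶ 0` relating consecutive cosyzygies `Ωⁱ` of `G`. -/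
noncomputable def cosyzygyShortComplex (i : ℕ) : ShortComplex (Mᵒᵖ ⥤ AddCommGrpCat.{u}) :=
  .mk (toEffHull J (cosyzygy J G i).obj) (toCosyzygy J G (i + 1)) (cokernel.condition _)

variable {J G}

lemma cosyzygyShortComplex_shortExact {i : ℕ} (h : Presheaf.IsSeparated J (cosyzygy J G i).obj) :
    (cosyzygyShortComplex J G i).ShortExact where
  exact := ShortComplex.exact_of_g_is_cokernel _ (cokernelIsCokernel _)
  mono_f := (NatTrans.mono_iff_mono_app _).2 fun X =>
    (AddCommGrpCat.mono_iff_injective _).2 (toEffHull_app_injective h X)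
  epi_g := inferInstanceAs (Epi (cokernel.π (toEffHull J (cosyzygy J G i).obj)))

lemma toCosyzygy_app_surjective (X : Mᵒᵖ) :
    ∀ i, Function.Surjective ((toCosyzygy J G i).app X)
  | 0 => fun x => ⟨x, rfl⟩
  | i + 1 => (AddCommGrpCat.epi_iff_surjective _).1
      (inferInstanceAs (Epi ((cokernel.π (toEffHull J (cosyzygy J G i).obj)).app X)))

lemma isCoresolution_coresolutionD
    (h : ∀ i ≤ n, Presheaf.IsSeparated J (cosyzygy J G i).obj) :
    IsCoresolution J n (coresolutionD J G) where
  additive_zero := inferInstanceAs G.Additive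
  injective X := toEffHull_app_injective (h 0 n.zero_le) X
  exact i hi X x := by
    have hinj := toEffHull_app_injective (h (i + 1) hi) X
    have hex := shortExact_app_exact (cosyzygyShortComplex_shortExact (h i hi.le)) X x
    refine (map_eq_zero_iff _ hinj).trans (hex.trans ?_)
    exact (Set.ext_iff.1 ((toCosyzygy_app_surjective X i).range_comp _) x).symm
  effInjective i _ := effInjective_effHull J _

lemma AcyclicUpTo.cosyzygy {𝒳 : Set (NSeq M)} {h𝒳 : IsNExactSite n 𝒳}
    (hG : AcyclicUpTo n 𝒳 n G) (i : ℕ) {k : ℕ} (hk : i + k = n) :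
    AcyclicUpTo n 𝒳 k (cosyzygy h𝒳.topology G i).obj := by
  induction i generalizing k with
  | zero =>
    obtain rfl : k = n := by lia
    exact hG
  | succ i ih =>
    have hi := ih (show i + (k + 1) = n by lia)
    have hI := effInjective_effHull h𝒳.topology (NExactCat.cosyzygy h𝒳.topology G i).obj
    have : (cosyzygyShortComplex h𝒳.topology G i).X₂.Additive := hI.additive
    exact .of_shortExact (cosyzygyShortComplex_shortExact (h𝒳.isSeparated_topology hi.injective))
      (fun P hP => (h𝒳.nExact P hP).1) (by lia) hi hI.acyclicUpTo

lemma AcyclicUpTo.isCoresolution {𝒳 : Set (NSeq M)} {h𝒳 : IsNExactSite n 𝒳}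
    (hG : AcyclicUpTo n 𝒳 n G) : IsCoresolution h𝒳.topology n (coresolutionD h𝒳.topology G) :=
  isCoresolution_coresolutionD fun i hi =>
    h𝒳.isSeparated_topology (hG.cosyzygy i (Nat.add_sub_of_le hi)).injective

end Coresolution

section ExtensionClass

variable {M : Type u} [SmallCategory M] [Preadditive M] {n : ℕ} {A B : M}
  {J : GrothendieckTopology M} {S T : RepSeq M n A B}

/-- `S` is an `n`-fold extension of `H_B` by `H_A` up to presheaves which vanish locally for `J`. -/
structure RepSeq.IsExtension (J : GrothendieckTopology M) (S : RepSeq M n A B) : Prop where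
  additive : ∀ i, 1 ≤ i → i ≤ n → (S.F i).Additive
  locallyExactSeq : LocallyExactSeq J n S.τ

/-- A morphism, in either direction, between two `n`-fold extensions of `H_B` by `H_A` up to
presheaves which vanish locally for `J`. -/
def YonedaStep (J : GrothendieckTopology M) (S T : RepSeq M n A B) : Prop :=
  S.IsExtension J ∧ T.IsExtension J ∧ (RepSeqConnects S T ∨ RepSeqConnects T S)

lemma RepSeq.Good.isExtension {𝒳 : Set (NSeq M)} (hS : S.Good 𝒳) (h𝒳 : IsNExactSite n 𝒳) :
    S.IsExtension h𝒳.topology where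
  additive i h1 hi := (hS.1 i h1 hi).1
  locallyExactSeq :=
    { zero X x hx := by
        obtain ⟨V, p, hp, hx⟩ := hS.2.1 X x hx
        exact ⟨V, p, hp, 0, hx.symm⟩
      succ := hS.2.2.1
      last X x _ := hS.2.2.2 X x }

lemma RepSeqStep.yonedaStep {𝒳 : Set (NSeq M)} (h𝒳 : IsNExactSite n 𝒳) (h : RepSeqStep 𝒳 S T) :
    YonedaStep h𝒳.topology S T :=
  ⟨h.1.isExtension h𝒳, h.2.1.isExtension h𝒳, h.2.2⟩

lemma IsNExactSite.isExtension_repSeqOf {𝒳 : Set (NSeq M)} (h𝒳 : IsNExactSite n 𝒳) {Z : NSeq M}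
    (hZ : Z ∈ 𝒳) (h0 : Z.X 0 = A) (htop : Z.X (n + 1) = B) :
    (repSeqOf n Z h0 htop (h𝒳.nExact Z hZ).1).IsExtension h𝒳.topology where
  additive i _ _ := inferInstanceAs (preadditiveYoneda.obj (Z.X i)).Additive
  locallyExactSeq := h𝒳.locallyExactSeq_preadditiveYoneda hZ

lemma RepSeq.IsExtension.additive_succ (hS : S.IsExtension J) {i : ℕ} (hi : i ≤ n) :
    (S.F (i + 1)).Additive := by
  rcases hi.lt_or_eq with hi | rfl
  · exact hS.additive _ i.succ_pos hi
  · rw [S.hFtop]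
    infer_instance

lemma RepSeq.IsExtension.weakCokernelFor (hS : S.IsExtension J) {i : ℕ} (hi : i < n)
    {I : Mᵒᵖ ⥤ AddCommGrpCat.{u}} (hI : EffInjective J I) :
    WeakCokernelFor (S.τ i) (S.τ (i + 1)) I :=
  have := hS.additive_succ (i := i + 1) hi
  hI.weakCokernelFor (hS.locallyExactSeq.succ i hi)

variable {K : ℕ → Mᵒᵖ ⥤ AddCommGrpCat.{u}} {δ : ∀ i, K i ⟶ K (i + 1)}
  {η : preadditiveYoneda.obj A ⟶ K 0} {β β' : preadditiveYoneda.obj B ⟶ K (n + 1)}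

/-- `β` represents the extension class of `S` computed with the coresolution `δ` of `K 0`: up to a
boundary `h ≫ δ n`, it is the last component of an extension of `η` to a morphism of complexes. -/
def RepSeq.IsClass (S : RepSeq M n A B) (δ : ∀ i, K i ⟶ K (i + 1))
    (η : preadditiveYoneda.obj A ⟶ K 0) (β : preadditiveYoneda.obj B ⟶ K (n + 1)) : Prop :=
  ∃ (u : ∀ i, S.F i ⟶ K i) (h : preadditiveYoneda.obj B ⟶ K n), IsChainMap n S.τ δ u ∧
    u 0 = eqToHom S.hF0 ≫ η ∧ u (n + 1) = eqToHom S.hFtop ≫ (β + h ≫ δ n)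

lemma RepSeq.IsExtension.exists_isClass (hS : S.IsExtension J) (hK : IsCoresolution J n δ)
    (η : preadditiveYoneda.obj A ⟶ K 0) : ∃ β, S.IsClass δ η β := by
  have := hS.additive_succ n.zero_le
  obtain ⟨u, hu0, hu⟩ := IsChainMap.exists_of_weakCokernelFor (d := S.τ) (δ := δ)
    (fun i hi => hK.comp_eq_zero hi)
    (fun i hi => hS.weakCokernelFor hi (hK.effInjective (i + 1) hi)) (eqToHom S.hF0 ≫ η)
    ((hK.effInjective 0 n.zero_le).weakCokernelFor hS.locallyExactSeq.zero _ zero_comp)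
  exact ⟨eqToHom S.hFtop.symm ≫ u (n + 1), u, 0, hu, hu0, by simp⟩

lemma RepSeq.IsClass.exists_eq_add (hβ : S.IsClass δ η β) (hβ' : S.IsClass δ η β')
    (hS : S.IsExtension J) (hK : IsCoresolution J n δ) : ∃ h, β = β' + h ≫ δ n := by
  obtain ⟨u, h, hu, hu0, hun⟩ := hβ
  obtain ⟨u', h', hu', hu0', hun'⟩ := hβ'
  have := hS.additive_succ le_rfl
  obtain ⟨s, -, -, hs : u (n + 1) - u' (n + 1) = _⟩ := (hu.sub hu').nullHomotopic_of_weakCokernelFor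
    (fun i hi => hK.comp_eq_zero hi)
    (fun i hi => hS.weakCokernelFor hi (hK.effInjective i hi.le))
    (fun w => (hK.effInjective n le_rfl).eq_zero_of_comp_eq_zero hS.locallyExactSeq.last)
    0 (by rw [hu0, hu0', sub_self, comp_zero])
  rw [hun, hun', ← Preadditive.comp_sub] at hs
  refine ⟨h' - h + eqToHom S.hFtop.symm ≫ s n, ?_⟩
  rw [Preadditive.add_comp, Preadditive.sub_comp, Category.assoc, ← hs, eqToHom_trans_assoc,
    eqToHom_refl, Category.id_comp]
  abel

lemma RepSeq.IsClass.add_comp (hβ : S.IsClass δ η β) (h : preadditiveYoneda.obj B ⟶ K n) :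
    S.IsClass δ η (β + h ≫ δ n) := by
  obtain ⟨u, h', hu, hu0, hun⟩ := hβ
  exact ⟨u, h' - h, hu, hu0, by rw [hun, Preadditive.sub_comp, add_add_sub_cancel]⟩

lemma RepSeq.IsClass.of_connects (hβ : T.IsClass δ η β) (hST : RepSeqConnects S T) :
    S.IsClass δ η β := by
  obtain ⟨φ, hφ, hφ0, hφn⟩ := hST
  obtain ⟨u, h, hu, hu0, hun⟩ := hβ
  refine ⟨fun i => φ i ≫ u i, h, IsChainMap.comp hφ hu, ?_, ?_⟩
  · simp only [hφ0, hu0, eqToHom_trans_assoc]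
  · simp only [hφn, hun, eqToHom_trans_assoc]

lemma RepSeq.IsClass.of_yonedaStep (hβ : S.IsClass δ η β) (hST : YonedaStep J S T)
    (hK : IsCoresolution J n δ) : T.IsClass δ η β := by
  obtain ⟨hS, hT, h | h⟩ := hST
  · obtain ⟨β', hβ'⟩ := hT.exists_isClass hK η
    obtain ⟨h, rfl⟩ := hβ.exists_eq_add (hβ'.of_connects h) hS hK
    exact hβ'.add_comp h
  · exact hβ.of_connects h

lemma RepSeq.IsClass.of_reflTransGen (hβ : S.IsClass δ η β)
    (hST : Relation.ReflTransGen (YonedaStep J) S T) (hK : IsCoresolution J n δ) :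
    T.IsClass δ η β := by
  induction hST with
  | refl => exact hβ
  | tail _ h ih => exact ih.of_yonedaStep h hK

end ExtensionClass

section Comparison

variable {M : Type u} [SmallCategory M] [Preadditive M] {n : ℕ}

lemma exists_eq_comp_of_map_comp_eq {V X Y : M} {F : Mᵒᵖ ⥤ AddCommGrpCat.{u}}
    {v : preadditiveYoneda.obj Y ⟶ F} [IsIso v] {p : V ⟶ X} {a : V ⟶ Y}
    {t : preadditiveYoneda.obj X ⟶ F}
    (h : preadditiveYoneda.map a ≫ v = preadditiveYoneda.map p ≫ t) : ∃ s, a = p ≫ s := by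
  refine ⟨preadditiveYoneda.preimage (t ≫ inv v), preadditiveYoneda.map_injective ?_⟩
  rw [Functor.map_comp, Functor.map_preimage, ← Category.assoc, ← h, Category.assoc,
    IsIso.hom_inv_id, Category.comp_id]

lemma IsNExactSeq.nullHomotopic_sub_id {Z W : NSeq M} (hZ : IsNExactSeq n Z)
    {f : ∀ i, Z.X i ⟶ W.X i} (hf : IsChainMap n Z.d W.d f) {g : ∀ i, W.X i ⟶ Z.X i}
    (hg : IsChainMap n W.d Z.d g) (h : f 0 ≫ g 0 = 𝟙 _) :
    NullHomotopic n Z.d Z.d fun i => f i ≫ g i - 𝟙 (Z.X i) :=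
  ((hf.comp hg).sub .id).nullHomotopic_of_weakCokernelFor (fun i hi => hZ.1 i hi)
    (fun _ hi => hZ.2.2.weakCokernelFor _ hi) (fun _ => hZ.2.2.eq_zero_of_comp_eq_zero) 0
    (by rw [h, sub_self, comp_zero])

variable {J : GrothendieckTopology M} {K : ℕ → Mᵒᵖ ⥤ AddCommGrpCat.{u}}
  {δ : ∀ i, K i ⟶ K (i + 1)}

lemma IsCoresolution.nullHomotopic (hK : IsCoresolution J n δ) {P : NSeq M}
    (hP : P.IsComplex n) {c : ∀ i, preadditiveYoneda.obj (P.X i) ⟶ K i}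
    (hc : IsChainMap n (fun i => preadditiveYoneda.map (P.d i)) δ c)
    (h : preadditiveYoneda.obj (P.X (n + 1)) ⟶ K n) (hh : c (n + 1) = h ≫ δ n) :
    NullHomotopic n (fun i => preadditiveYoneda.map (P.d i)) δ c :=
  have := hK.mono
  hc.nullHomotopic_of_weakKernelFor
    (fun i hi => by rw [← Functor.map_comp, hP i hi, Functor.map_zero])
    (fun _ hi => hK.weakKernelFor hi _) (fun _ => zero_of_comp_mono (δ 0)) h hh

variable {𝒳 : Set (NSeq M)} {Z W : NSeq M}
  {u : ∀ i, preadditiveYoneda.obj (Z.X i) ⟶ K i} {v : ∀ i, preadditiveYoneda.obj (W.X i) ⟶ K i}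

-- Over an admissible epimorphism `P.d n` the morphism `z` lifts along `W.d n`; the resulting
-- morphism of complexes `P ⟶ W` is null-homotopic because its extension class is a boundary, and
-- the homotopy provides the lift of `z` itself.
lemma IsCoresolution.exists_lift_last (hK : IsCoresolution J n δ) (h𝒳 : IsNExactSite n 𝒳)
    (hW : W ∈ 𝒳) (hv : IsChainMap n (fun i => preadditiveYoneda.map (W.d i)) δ v) [IsIso (v 0)]
    {V : M} {z : V ⟶ W.X (n + 1)} (h : preadditiveYoneda.obj V ⟶ K n)
    (hz : preadditiveYoneda.map z ≫ v (n + 1) = h ≫ δ n) : ∃ w, w ≫ W.d n = z := by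
  obtain ⟨Y, p, q, ⟨P, hP, rfl, rfl, hp⟩, hq⟩ := h𝒳.exists_lift (admEpi_d hW) z
  obtain rfl : P.d n = p := by simpa using hp
  obtain ⟨hPc, -, hPr⟩ := h𝒳.nExact P hP
  obtain ⟨hWc, hWl, -⟩ := h𝒳.nExact W hW
  obtain ⟨a, rfl, ha⟩ := IsChainMap.exists_of_weakKernelFor (d := P.d) (δ := W.d)
    (fun i hi => hPc i hi) (fun i hi => hWl.weakKernelFor _ hi) z ⟨q, hq⟩
  obtain ⟨t, ht, -⟩ := hK.nullHomotopic hPc ((ha.map preadditiveYoneda).comp hv) h hz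
  obtain ⟨s, hs⟩ := exists_eq_comp_of_map_comp_eq ht
  obtain ⟨r, -, -, hr⟩ := ha.nullHomotopic_of_weakCokernelFor (fun i hi => hWc i hi)
    (fun i hi => hPr.weakCokernelFor _ hi) (fun _ => hPr.eq_zero_of_comp_eq_zero) s hs
  exact ⟨r n, hr.symm⟩

lemma IsCoresolution.exists_isChainMap (hK : IsCoresolution J n δ) (h𝒳 : IsNExactSite n 𝒳)
    (hn : 1 ≤ n) (hZ : Z ∈ 𝒳) (hW : W ∈ 𝒳)
    (hu : IsChainMap n (fun i => preadditiveYoneda.map (Z.d i)) δ u)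
    (hv : IsChainMap n (fun i => preadditiveYoneda.map (W.d i)) δ v) [IsIso (v 0)]
    {a : Z.X 0 ⟶ W.X 0} (ha : preadditiveYoneda.map a ≫ v 0 = u 0)
    {b : Z.X (n + 1) ⟶ W.X (n + 1)} (h : preadditiveYoneda.obj (Z.X (n + 1)) ⟶ K n)
    (hb : preadditiveYoneda.map b ≫ v (n + 1) - u (n + 1) = h ≫ δ n) :
    ∃ f, IsChainMap n Z.d W.d f ∧ f 0 = a ∧ f (n + 1) = b := by
  obtain ⟨hZc, -, -⟩ := h𝒳.nExact Z hZ
  obtain ⟨hWc, hWl, -⟩ := h𝒳.nExact W hW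
  obtain ⟨w, hw⟩ := hK.exists_lift_last h𝒳 hW hv (z := Z.d n ≫ b)
    (u n + preadditiveYoneda.map (Z.d n) ≫ h) (by
      rw [Functor.map_comp, Category.assoc, sub_eq_iff_eq_add'.1 hb, Preadditive.comp_add,
        hu n le_rfl, Preadditive.add_comp, Category.assoc])
  obtain ⟨f, rfl, hf⟩ := IsChainMap.exists_of_weakKernelFor (d := Z.d) (δ := W.d)
    (fun i hi => hZc i hi) (fun i hi => hWl.weakKernelFor _ hi) b ⟨w, hw⟩
  obtain ⟨t, ht, -⟩ := hK.nullHomotopic hZc (((hf.map preadditiveYoneda).comp hv).sub hu) h hb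
  obtain ⟨s, hs⟩ := exists_eq_comp_of_map_comp_eq (p := Z.d 0) (a := f 0 - a)
    (Eq.trans (by rw [Functor.map_sub, Preadditive.sub_comp, ha]) ht)
  obtain ⟨g, hg, hg0, hgn⟩ := hf.exists_sub_comp_zero hn (hWc 0 hn) s
  exact ⟨g, hg, by rw [hg0, ← hs, sub_sub_cancel], hgn⟩

lemma isClass_repSeqOf_iff {A B : M} {hZ0 : Z.X 0 = A} {hZtop : Z.X (n + 1) = B}
    {hZ : Z.IsComplex n} {η : preadditiveYoneda.obj A ⟶ K 0}
    {β : preadditiveYoneda.obj B ⟶ K (n + 1)} :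
    (repSeqOf n Z hZ0 hZtop hZ).IsClass δ η β ↔
      ∃ (u : ∀ i, preadditiveYoneda.obj (Z.X i) ⟶ K i) (h : preadditiveYoneda.obj B ⟶ K n),
        IsChainMap n (fun i => preadditiveYoneda.map (Z.d i)) δ u ∧
        u 0 = preadditiveYoneda.map (eqToHom hZ0) ≫ η ∧
        u (n + 1) = preadditiveYoneda.map (eqToHom hZtop) ≫ (β + h ≫ δ n) := by
  simp only [eqToHom_map]
  exact Iff.rfl

lemma IsCoresolution.exists_isChainMap_of_isClass (hK : IsCoresolution J n δ)
    (h𝒳 : IsNExactSite n 𝒳) (hn : 1 ≤ n) (hZ : Z ∈ 𝒳) (hW : W ∈ 𝒳) {A B : M}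
    {hZ0 : Z.X 0 = A} {hZtop : Z.X (n + 1) = B} {hZc : Z.IsComplex n}
    {hW0 : W.X 0 = A} {hWtop : W.X (n + 1) = B} {hWc : W.IsComplex n}
    {η : preadditiveYoneda.obj A ⟶ K 0} [IsIso η] {β : preadditiveYoneda.obj B ⟶ K (n + 1)}
    (hZβ : (repSeqOf n Z hZ0 hZtop hZc).IsClass δ η β)
    (hWβ : (repSeqOf n W hW0 hWtop hWc).IsClass δ η β) :
    ∃ f, IsChainMap n Z.d W.d f ∧ f 0 = eqToHom (hZ0.trans hW0.symm) ∧
      f (n + 1) = eqToHom (hZtop.trans hWtop.symm) := by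
  obtain ⟨u, h, hu, hu0, hun⟩ := isClass_repSeqOf_iff.1 hZβ
  obtain ⟨v, k, hv, hv0, hvn⟩ := isClass_repSeqOf_iff.1 hWβ
  have : IsIso (v 0) := by
    rw [hv0]
    infer_instance
  refine hK.exists_isChainMap h𝒳 hn hZ hW hu hv ?_
    (preadditiveYoneda.map (eqToHom hZtop) ≫ (k - h)) ?_
  · rw [hu0, hv0, ← Functor.map_comp_assoc, eqToHom_trans]
  · rw [hun, hvn, ← Functor.map_comp_assoc, eqToHom_trans, ← Preadditive.comp_sub,
      add_sub_add_left_eq_sub, Category.assoc, Preadditive.sub_comp]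

theorem homotopy_equivalent_of_yoneda_equivalent_general {𝒳 : Set (NSeq M)}
    (h𝒳 : IsNExactSite n 𝒳) (hn : 1 ≤ n) {Z W : NSeq M} (hZ : Z ∈ 𝒳) (hW : W ∈ 𝒳)
    (e0 : W.X 0 = Z.X 0) (etop : W.X (n + 1) = Z.X (n + 1))
    (hzig : Relation.ReflTransGen (YonedaStep h𝒳.topology)
      (repSeqOf n Z rfl rfl (h𝒳.nExact Z hZ).1)
      (repSeqOf n W e0 etop (h𝒳.nExact W hW).1)) :
    ∃ f, IsChainMap n Z.d W.d f ∧ f 0 = eqToHom e0.symm ∧ f (n + 1) = eqToHom etop.symm ∧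
      ∃ g, IsChainMap n W.d Z.d g ∧
        (NullHomotopic n Z.d Z.d fun i => f i ≫ g i - 𝟙 (Z.X i)) ∧
        NullHomotopic n W.d W.d fun i => g i ≫ f i - 𝟙 (W.X i) := by
  have hK := (h𝒳.acyclicUpTo_preadditiveYoneda (Z.X 0)).isCoresolution (h𝒳 := h𝒳)
  obtain ⟨η, hη⟩ : ∃ η : preadditiveYoneda.obj (Z.X 0) ⟶ coresolutionObj h𝒳.topology _ 0,
      IsIso η := ⟨𝟙 _, inferInstanceAs (IsIso (𝟙 (preadditiveYoneda.obj (Z.X 0))))⟩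
  obtain ⟨β, hZβ⟩ := (h𝒳.isExtension_repSeqOf hZ rfl rfl).exists_isClass hK η
  have hWβ := hZβ.of_reflTransGen hzig hK
  obtain ⟨f, hf, hf0, hfn⟩ := hK.exists_isChainMap_of_isClass h𝒳 hn hZ hW hZβ hWβ
  obtain ⟨g, hg, hg0, -⟩ := hK.exists_isChainMap_of_isClass h𝒳 hn hW hZ hWβ hZβ
  exact ⟨f, hf, hf0, hfn, g, hg,
    (h𝒳.nExact Z hZ).nullHomotopic_sub_id hf hg (by rw [hf0, hg0, eqToHom_trans, eqToHom_refl]),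
    (h𝒳.nExact W hW).nullHomotopic_sub_id hg hf (by rw [hf0, hg0, eqToHom_trans, eqToHom_refl])⟩

end Comparison

/-- Let `(M,𝒳)` be a small `n`-exact category and `Z`, `W` two
`𝒳`-admissible `n`-exact sequences with the same end terms.  If their complexes of
representable functors `0 → H_{X⁰} → ⋯ → H_{X^{n+1}} → 0` are Yoneda equivalent in the
localization of `Mod(M)` at the weakly effaceable functors — i.e. connected by a finite zigzag
of complexes with `Eff`-closed middle terms and weakly effaceable homology, via morphisms of
complexes restricting to the identity on the end terms — then `Z` and `W` are homotopy
equivalent `n`-exact sequences: there is a morphism of complexes `Z ⟶ W` which is the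
identity on both end terms and is a homotopy equivalence. -/
theorem homotopy_equivalent_of_yoneda_equivalent
    {M : Type u} [SmallCategory M] [Preadditive M] [HasFiniteBiproducts M]
    (n : ℕ) (hn : 1 ≤ n) (𝒳 : Set (NSeq M)) (h𝒳 : IsNExactStructure n 𝒳)
    (Z W : NSeq M) (hZ : Z ∈ 𝒳) (hW : W ∈ 𝒳)
    (e0 : W.X 0 = Z.X 0) (etop : W.X (n + 1) = Z.X (n + 1))
    (hzig : Relation.ReflTransGen (RepSeqStep 𝒳)
      (repSeqOf n Z rfl rfl (h𝒳.nExact Z hZ).1)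
      (repSeqOf n W e0 etop (h𝒳.nExact W hW).1)) :
    ∃ f : ∀ i, Z.X i ⟶ W.X i,
      (∀ i ≤ n, Z.d i ≫ f (i + 1) = f i ≫ W.d i) ∧
      f 0 = eqToHom e0.symm ∧ f (n + 1) = eqToHom etop.symm ∧
      ∃ g : ∀ i, W.X i ⟶ Z.X i,
        (∀ i ≤ n, W.d i ≫ g (i + 1) = g i ≫ Z.d i) ∧
        (∃ s : ∀ i, Z.X (i + 1) ⟶ Z.X i,
          f 0 ≫ g 0 - 𝟙 (Z.X 0) = Z.d 0 ≫ s 0 ∧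
          (∀ i < n, f (i + 1) ≫ g (i + 1) - 𝟙 (Z.X (i + 1)) =
            Z.d (i + 1) ≫ s (i + 1) + s i ≫ Z.d i) ∧
          f (n + 1) ≫ g (n + 1) - 𝟙 (Z.X (n + 1)) = s n ≫ Z.d n) ∧
        (∃ t : ∀ i, W.X (i + 1) ⟶ W.X i,
          g 0 ≫ f 0 - 𝟙 (W.X 0) = W.d 0 ≫ t 0 ∧
          (∀ i < n, g (i + 1) ≫ f (i + 1) - 𝟙 (W.X (i + 1)) =
            W.d (i + 1) ≫ t (i + 1) + t i ≫ W.d i) ∧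
          g (n + 1) ≫ f (n + 1) - 𝟙 (W.X (n + 1)) = t n ≫ W.d n) :=
  homotopy_equivalent_of_yoneda_equivalent_general (h𝒳.isNExactSite hn) hn hZ hW e0 etop
    (Relation.ReflTransGen.mono (fun _ _ h => h.yonedaStep _) _ _ hzig)

end NExactCat
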